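/- arXiv:1308.2154 — 3 statements merged into one kernel-verified Lean document; each statement's English description precedes it below -/
import Mathlib

section
/- Let $(\Omega,\mathcal{F},(\mathcal{F}_t)_{t\ge0},P)$ be a filtered probability space whose filtration is right-continuous. Let $X$ be a càdlàg adapted real-valued process with the convention $X_{0-}=X_0$, and write $\Delta X_t = X_t - X_{t-}$. Let $F\subseteq\mathbb{R}$ be a closed set. Then $T=\inf\{t\ge0 \mid \Delta X_t\in F\}$ is a stopping time with respect to $(\mathcal{F}_t)_{t\ge0}$. -/
/-!
If `0 ∈ F`, then `T = 0`, because `ΔX_0 = 0`. Suppose `0 ∉ F`. Then for every `t ≥ 0`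

`{T ≤ t} = ⋂ₙ ⋃_{p < q in D, q - p < 1/(n+1)} {X_q - X_p` is within `1/(n+1)` of `F}`,

where `D` is the countable set consisting of `t` and the rationals, intersected with `[0, t]`. The
right-hand side only involves countably many values of `X` up to time `t`, hence lies in `ℱ t`.

* A jump in `F` at a time `s ∈ (0, t]` is approximated by the increments `X_q - X_p` with `p ↑ s` and
  `q ↓ s` in `D` (or `q = s = t`): `exists_increment_near_jump`.
* Conversely, consider increments over shorter and shorter intervals `[p, q]` that get closer and
  closer to `F`. By compactness the endpoints accumulate at a common time `s`. If they lie on the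
  same side of `s`, the increments tend to `0`, forcing `0 ∈ F`; otherwise `p < s ≤ q` and they
  tend to `ΔX_s`, so `ΔX_s ∈ F`: `exists_jump_of_increments`. The intervals need only lie in
  `[0, t + 1/(n+1)]`, and so the same lemma shows that the infimum defining `T` is attained.
-/

open MeasureTheory Filter Topology Set
open scoped ENNReal

/-- A jump at a time `s ∈ (0, t]` is approximated by increments over short intervals whose
endpoints are rational or equal to `t`. The endpoint `t` is needed when `s = t`. -/
lemma exists_increment_near_jump {f fm : ℝ → ℝ} {F : Set ℝ} {s t ε : ℝ} (hs : 0 < s) (hst : s ≤ t)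
    (hε : 0 < ε) (hr : ContinuousWithinAt f (Ici s) s) (hl : Tendsto f (𝓝[<] s) (𝓝 (fm s)))
    (hF : f s - fm s ∈ F) :
    ∃ p ∈ insert t (range ((↑) : ℚ → ℝ)) ∩ Icc 0 t,
      ∃ q ∈ insert t (range ((↑) : ℚ → ℝ)) ∩ Icc 0 t,
        p < q ∧ q - p < ε ∧ f q - f p ∈ Metric.thickening ε F := by
  have h2 : 0 < ε / 2 := by positivity
  obtain ⟨a, has, ha⟩ : ∃ a < s, ∀ x ∈ Ioo a s, dist (f x) (fm s) < ε / 2 :=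
    (mem_nhdsLT_iff_exists_Ioo_subset).1 (hl (Metric.ball_mem_nhds _ h2))
  obtain ⟨b, hsb, hb⟩ : ∃ b > s, ∀ x ∈ Ico s b, dist (f x) (f s) < ε / 2 :=
    (mem_nhdsGE_iff_exists_Ico_subset).1 (hr (Metric.ball_mem_nhds _ h2))
  obtain ⟨p, hp1, hp2⟩ := exists_rat_btwn
    (show max (max a 0) (s - ε / 2) < s from max_lt (max_lt has hs) (by linarith))
  simp only [max_lt_iff] at hp1
  obtain ⟨q, hqD, hsq, hqt, hqb, hqε⟩ :
      ∃ q ∈ insert t (range ((↑) : ℚ → ℝ)), s ≤ q ∧ q ≤ t ∧ q < b ∧ q < s + ε / 2 := by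
    rcases hst.eq_or_lt with rfl | hlt
    · exact ⟨s, mem_insert _ _, le_rfl, le_rfl, hsb, by linarith⟩
    · obtain ⟨q, hq1, hq2⟩ := exists_rat_btwn
        (show s < min (min b t) (s + ε / 2) from lt_min (lt_min hsb hlt) (by linarith))
      simp only [lt_min_iff] at hq2
      exact ⟨q, mem_insert_of_mem _ ⟨q, rfl⟩, hq1.le, hq2.1.2.le, hq2.1.1, hq2.2⟩
  refine ⟨p, ⟨mem_insert_of_mem _ ⟨p, rfl⟩, hp1.1.2.le, by linarith⟩, q, ⟨hqD, by linarith, hqt⟩,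
    by linarith, by linarith, Metric.mem_thickening_iff.2 ⟨_, hF, ?_⟩⟩
  have h3 := ha p ⟨hp1.1.1, hp2⟩
  have h4 := hb q ⟨hsq, hqb⟩
  rw [Real.dist_eq, abs_lt] at *
  constructor <;> linarith [h3.1, h3.2, h4.1, h4.2]

/-- If increments of a càdlàg function over intervals shrinking in length approach the closed set
`F`, and `0 ∉ F`, then the function has a jump in `F`. -/
lemma exists_jump_of_increments {f fm : ℝ → ℝ} {F : Set ℝ} {t : ℝ}
    (hr : ∀ s, 0 ≤ s → ContinuousWithinAt f (Ici s) s)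
    (hl : ∀ s, 0 < s → Tendsto f (𝓝[<] s) (𝓝 (fm s)))
    (hF : IsClosed F) (h0 : (0 : ℝ) ∉ F)
    (h : ∀ n : ℕ, ∃ p q, 0 ≤ p ∧ p < q ∧ q ≤ t + 1 / ((n : ℝ) + 1) ∧ q - p < 1 / ((n : ℝ) + 1) ∧
      f q - f p ∈ Metric.thickening (1 / ((n : ℝ) + 1)) F) :
    ∃ s, 0 < s ∧ s ≤ t ∧ f s - fm s ∈ F := by
  choose p q hp0 hpq hqt hqp hth using h
  choose z hzF hz using fun n => Metric.mem_thickening_iff.1 (hth n)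
  -- Convergence along an ultrafilter avoids passing to successive subsequences.
  let U : Ultrafilter ℕ := hyperfilter ℕ
  have hU : (U : Filter ℕ) ≤ atTop := Nat.hyperfilter_le_atTop
  have hε : Tendsto (fun n : ℕ => 1 / ((n : ℝ) + 1)) U (𝓝 0) :=
    tendsto_one_div_add_atTop_nhds_zero_nat.mono_left hU
  have hε1 (n : ℕ) : 1 / ((n : ℝ) + 1) ≤ 1 := by
    rw [div_le_one (by positivity)]; linarith [n.cast_nonneg (α := ℝ)]
  obtain ⟨s, ⟨hs0, -⟩, hps⟩ : ∃ s ∈ Icc 0 (t + 1), Tendsto p U (𝓝 s) := by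
    refine isCompact_Icc.ultrafilter_le_nhds (U.map p) (le_principal_iff.2 ?_)
    exact Eventually.of_forall (f := (U : Filter ℕ)) fun n => ⟨hp0 n, by linarith [hpq n, hqt n, hε1 n]⟩
  have hqs : Tendsto q U (𝓝 s) := by
    refine tendsto_of_tendsto_of_tendsto_of_le_of_le hps (by simpa only [add_zero] using hps.add hε)
      (fun n => (hpq n).le) (fun n => ?_)
    linarith [hqp n]
  have hst : s ≤ t := by
    refine le_of_tendsto_of_tendsto' hqs (?_ : Tendsto _ _ (𝓝 t)) hqt
    simpa using hε.const_add t
  have hright {u : ℕ → ℝ} (hu : Tendsto u U (𝓝 s)) (hsu : ∀ᶠ n in U, s ≤ u n) :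
      Tendsto (fun n => f (u n)) U (𝓝 (f s)) :=
    (hr s hs0).tendsto.comp (tendsto_nhdsWithin_iff.2 ⟨hu, hsu⟩)
  have hleft {u : ℕ → ℝ} (hs : 0 < s) (hu : Tendsto u U (𝓝 s)) (hsu : ∀ᶠ n in U, ¬ s ≤ u n) :
      Tendsto (fun n => f (u n)) U (𝓝 (fm s)) :=
    (hl s hs).comp (tendsto_nhdsWithin_iff.2 ⟨hu, hsu.mono fun n hn => not_le.1 hn⟩)
  have hlim {c : ℝ} (hc : Tendsto (fun n => f (q n) - f (p n)) U (𝓝 c)) : c ∈ F := by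
    refine hF.mem_of_tendsto (f := z) (b := (U : Filter ℕ)) ?_ (Eventually.of_forall hzF)
    refine (tendsto_iff_of_dist ?_).1 hc
    exact squeeze_zero (fun _ => dist_nonneg) (fun n => (hz n).le) hε
  rcases U.em (fun n => s ≤ p n) with hsp | hsp
  · have hsq : ∀ᶠ n in U, s ≤ q n := hsp.mono fun n hn => hn.trans (hpq n).le
    exact absurd (hlim (by simpa using (hright hqs hsq).sub (hright hps hsp))) h0
  · have hs : 0 < s := by
      obtain ⟨n, hn⟩ := hsp.exists
      exact (hp0 n).trans_lt (not_le.1 hn)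
    rcases U.em (fun n => s ≤ q n) with hsq | hsq
    · exact ⟨s, hs, hst, hlim ((hright hqs hsq).sub (hleft hs hps hsp))⟩
    · exact absurd (hlim (by simpa using (hleft hs hqs hsq).sub (hleft hs hps hsp))) h0

/-- The first hitting time of a closed set by the jump process of a càdlàg
adapted process is a stopping time: for a right-continuous filtration `ℱ`,
a càdlàg adapted process `X` with left-limit process `Xm` (convention
`X_{0-} = X_0`), and a closed set `F ⊆ ℝ`, the random time
`T = inf {t ≥ 0 | ΔX_t ∈ F}` (with value `∞` on the empty set) satisfies
`(T ≤ t) ∈ ℱ t` for all `t ≥ 0`. -/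
theorem first_hitting_time_closed_jump_is_stopping_time
    {Ω : Type*} {m : MeasurableSpace Ω} {P : Measure Ω} [IsProbabilityMeasure P]
    (ℱ : Filtration ℝ m)
    -- the filtration is right-continuous
    (hright : ∀ t : ℝ, 0 ≤ t → (ℱ t : MeasurableSpace Ω) = ⨅ s ∈ Set.Ioi t, (ℱ s : MeasurableSpace Ω))
    (X Xm : ℝ → Ω → ℝ)
    -- `X` is adapted
    (hadapted : ∀ t : ℝ, 0 ≤ t → Measurable[ℱ t] (X t))
    -- `X` is right-continuous on `[0, ∞)`
    (hrc : ∀ ω, ∀ t : ℝ, 0 ≤ t → ContinuousWithinAt (fun s => X s ω) (Set.Ici t) t)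
    -- `Xm t` is the left limit of `X` at each `t > 0`
    (hleft : ∀ ω, ∀ t : ℝ, 0 < t →
      Tendsto (fun s => X s ω) (𝓝[<] t) (𝓝 (Xm t ω)))
    -- convention `X_{0-} = X_0`
    (hXm0 : ∀ ω, Xm 0 ω = X 0 ω)
    -- `F` is a closed set
    (F : Set ℝ) (hF : IsClosed F)
    -- `T` is the first hitting time of `F` by the jump process of `X`
    (T : Ω → ℝ≥0∞)
    (hT : ∀ ω, T ω = sInf (ENNReal.ofReal '' {t : ℝ | 0 ≤ t ∧ X t ω - Xm t ω ∈ F})) :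
    ∀ t : ℝ, 0 ≤ t → MeasurableSet[ℱ t] {ω | T ω ≤ ENNReal.ofReal t} := by
  intro t ht
  by_cases h0 : (0 : ℝ) ∈ F
  · have hall : {ω | T ω ≤ ENNReal.ofReal t} = univ := by
      refine eq_univ_of_forall fun ω => ?_
      rw [mem_ofPred_eq, hT]
      exact sInf_le_of_le ⟨0, ⟨le_rfl, by simpa [hXm0] using h0⟩, rfl⟩ (by simp)
    rw [hall]
    exact MeasurableSet.univ
  set D : Set ℝ := insert t (range ((↑) : ℚ → ℝ)) ∩ Icc 0 t with hD
  have hDc : D.Countable := ((countable_range _).insert t).mono inter_subset_left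
  have hεpos (n : ℕ) : 0 < 1 / ((n : ℝ) + 1) := by positivity
  -- There is no jump at time `0`.
  have hpos (ω : Ω) (s : ℝ) (hs : 0 ≤ s) (hsF : X s ω - Xm s ω ∈ F) : 0 < s := by
    refine hs.lt_of_ne ?_
    rintro rfl
    exact h0 (by simpa [hXm0] using hsF)
  have key : {ω | T ω ≤ ENNReal.ofReal t} =
      ⋂ n : ℕ, ⋃ p ∈ D, ⋃ q ∈ D, ⋃ _ : p < q ∧ q - p < 1 / ((n : ℝ) + 1),
        {ω | X q ω - X p ω ∈ Metric.thickening (1 / ((n : ℝ) + 1)) F} := by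
    ext ω
    simp only [mem_ofPred_eq, mem_iInter, mem_iUnion, exists_prop]
    constructor
    · intro hTt n
      obtain ⟨s, hs, hst, hsF⟩ : ∃ s, 0 < s ∧ s ≤ t ∧ X s ω - Xm s ω ∈ F := by
        refine exists_jump_of_increments (f := fun s => X s ω) (fm := fun s => Xm s ω)
          (hrc ω) (hleft ω) hF h0 fun k => ?_
        have hlt : T ω < ENNReal.ofReal (t + 1 / ((k : ℝ) + 1)) :=
          hTt.trans_lt ((ENNReal.ofReal_lt_ofReal_iff (by linarith [hεpos k])).2
            (by linarith [hεpos k]))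
        rw [hT, sInf_lt_iff] at hlt
        obtain ⟨_, ⟨s, ⟨hs, hsF⟩, rfl⟩, hlt⟩ := hlt
        have hs' := hpos ω s hs hsF
        have hst := (ENNReal.ofReal_lt_ofReal_iff (by linarith [hεpos k])).1 hlt
        obtain ⟨p, hp, q, hq, hpq, hqp, hth⟩ := exists_increment_near_jump
          (f := fun s => X s ω) (fm := fun s => Xm s ω) hs' hst.le (hεpos k)
          (hrc ω s hs) (hleft ω s hs') hsF
        exact ⟨p, q, hp.2.1, hpq, hq.2.2, hqp, hth⟩
      obtain ⟨p, hp, q, hq, hpq, hqp, hth⟩ := exists_increment_near_jump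
        (f := fun s => X s ω) (fm := fun s => Xm s ω) hs hst (hεpos n)
        (hrc ω s hs.le) (hleft ω s hs) hsF
      exact ⟨p, hp, q, hq, ⟨hpq, hqp⟩, hth⟩
    · intro h
      obtain ⟨s, hs, hst, hsF⟩ := exists_jump_of_increments (t := t)
        (f := fun s => X s ω) (fm := fun s => Xm s ω) (hrc ω) (hleft ω) hF h0 fun k => by
          obtain ⟨p, hp, q, hq, ⟨hpq, hqp⟩, hth⟩ := h k
          exact ⟨p, q, hp.2.1, hpq, by linarith [hq.2.2, hεpos k], hqp, hth⟩
      rw [hT]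
      exact sInf_le_of_le ⟨s, ⟨hs.le, hsF⟩, rfl⟩ (ENNReal.ofReal_le_ofReal hst)
  rw [key]
  refine MeasurableSet.iInter fun n => MeasurableSet.biUnion hDc fun p hp =>
    MeasurableSet.biUnion hDc fun q hq => MeasurableSet.iUnion fun _ => ?_
  have hmeas {r : ℝ} (hr : r ∈ D) : Measurable[ℱ t] (X r) :=
    (hadapted r hr.2.1).mono (ℱ.mono hr.2.2) le_rfl
  exact ((hmeas hq).sub (hmeas hp)) Metric.isOpen_thickening.measurableSet
end

section
/- Let $f:[0,\infty)\to\mathbb{R}$ be a càdlàg function with the convention $f(0-)=f(0)$, let $F\subseteq\mathbb{R}$ be a closed set not containing $0$, and let $t>0$. For $n\ge1$ put $F_n=\{x\in\mathbb{R} \mid \exists\, y\in F: |x-y|\le 1/n\}$ and $\Theta_n=\{(p,q)\in\mathbb{Q}^2 \mid 0<p<q<t,\ q-p\le 1/n\}$. Then there exists $s\in(0,t)$ with $f(s)-f(s-)\in F$ if and only if for every $n\ge1$ there exists $(p,q)\in\Theta_n$ with $f(q)-f(p)\in F_n$. -/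
/-! The forward direction approximates the jump time `s` by rationals on either side. For the converse,
take `(p n, q n)` witnessing the condition at `1/(n+1)`. A nonprincipal ultrafilter on `ℕ` makes `p`,
hence also `q`, converge to some `s ∈ [0,t]`, and decides on which side of `s` each of `p`, `q` lies.
If both lie on the same side, `f (q n) - f (p n)` tends to `0`; if `p < s ≤ q`, it tends to
`f s - fm s`. By closedness of `F` the limit lies in `F`, so `0 ∉ F` excludes the first alternative.
This also covers the endpoints: `p < s ≤ q` forces `0 < s < t`. -/

open Filter Topology Set

/-- If `u i` lies in the `ε i`-thickening of the closed set `F` with `ε → 0`, its limit lies in `F`. -/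
lemma mem_of_tendsto_thickening {l : Filter ℕ} [l.NeBot] {F : Set ℝ} (hF : IsClosed F)
    {u ε : ℕ → ℝ} {L : ℝ} (hu : Tendsto u l (𝓝 L)) (hε : Tendsto ε l (𝓝 0))
    (h : ∀ n, ∃ y ∈ F, |u n - y| ≤ ε n) : L ∈ F := by
  choose y hy hyu using h
  have hd : Tendsto (fun n => u n - y n) l (𝓝 0) :=
    squeeze_zero_norm (fun n => by simpa using hyu n) hε
  have hlim : Tendsto y l (𝓝 L) := by simpa using hu.sub hd
  exact hF.mem_of_tendsto hlim (Eventually.of_forall hy)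

/-- For a càdlàg function `f` (convention `f(0-) = f(0)`), a closed set `F`
not containing `0`, and `t > 0`: there is `s ∈ (0,t)` with `f(s) - f(s-) ∈ F`
iff for every `n ≥ 1` there are rationals `0 < p < q < t` with `q - p ≤ 1/n`
and `f(q) - f(p)` in the closed `1/n`-thickening of `F`. -/
theorem jump_in_closed_iff_rational_increments
    (f fm : ℝ → ℝ)
    -- `f` is right-continuous on `[0, ∞)`
    (hrc : ∀ t : ℝ, 0 ≤ t → ContinuousWithinAt f (Set.Ici t) t)
    -- `fm t` is the left limit of `f` at each `t > 0`
    (hleft : ∀ t : ℝ, 0 < t → Tendsto f (𝓝[<] t) (𝓝 (fm t)))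
    -- convention `f(0-) = f(0)`
    (hfm0 : fm 0 = f 0)
    -- `F` is a closed set not containing `0`
    (F : Set ℝ) (hF : IsClosed F) (hF0 : (0 : ℝ) ∉ F)
    (t : ℝ) (ht : 0 < t) :
    (∃ s : ℝ, 0 < s ∧ s < t ∧ f s - fm s ∈ F) ↔
      ∀ n : ℕ, 1 ≤ n → ∃ p q : ℚ,
        0 < (p : ℝ) ∧ (p : ℝ) < (q : ℝ) ∧ (q : ℝ) < t ∧ (q : ℝ) - (p : ℝ) ≤ 1 / n ∧
          f q - f p ∈ {x : ℝ | ∃ y ∈ F, |x - y| ≤ 1 / n} := by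
  constructor
  · rintro ⟨s, hs0, hst, hsF⟩ n hn
    have hn' : (0 : ℝ) < 1 / n := by
      have : (0 : ℝ) < n := by exact_mod_cast hn
      positivity
    obtain ⟨a, ha, hfa⟩ : ∃ a < s, ∀ x ∈ Ioo a s, |f x - fm s| < 1 / n / 2 := by
      have h := (hleft s hs0).eventually (Metric.ball_mem_nhds (fm s) (half_pos hn'))
      obtain ⟨a, ha, h⟩ := (mem_nhdsLT_iff_exists_Ioo_subset).1 h
      exact ⟨a, ha, fun x hx => by simpa [Real.dist_eq] using h hx⟩
    obtain ⟨b, hb, hfb⟩ : ∃ b > s, ∀ x ∈ Ico s b, |f x - f s| < 1 / n / 2 := by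
      have h := (hrc s hs0.le).eventually (Metric.ball_mem_nhds (f s) (half_pos hn'))
      obtain ⟨b, hb, h⟩ := (mem_nhdsGE_iff_exists_Ico_subset).1 h
      exact ⟨b, hb, fun x hx => by simpa [Real.dist_eq] using h hx⟩
    obtain ⟨p, hp, hps⟩ := exists_rat_btwn
      (show max (max a 0) (s - 1 / n / 2) < s from max_lt (max_lt ha hs0) (by linarith))
    obtain ⟨q, hsq, hq⟩ := exists_rat_btwn
      (show s < min (min b t) (s + 1 / n / 2) from lt_min (lt_min hb hst) (by linarith))
    simp only [max_lt_iff, lt_min_iff] at hp hq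
    refine ⟨p, q, hp.1.2, hps.trans hsq, hq.1.2, by linarith [hp.2, hq.2], f s - fm s, hsF, ?_⟩
    have h1 := abs_lt.1 (hfa p ⟨hp.1.1, hps⟩)
    have h2 := abs_lt.1 (hfb q ⟨hsq.le, hq.1.1⟩)
    exact abs_le.2 ⟨by linarith, by linarith⟩
  · intro h
    have h' := fun n : ℕ => h (n + 1) (Nat.succ_pos n)
    choose p q hp0 hpq hqt hqp hmem using h'
    let U : Ultrafilter ℕ := hyperfilter ℕ
    have hU : (U : Filter ℕ) ≤ atTop := Nat.hyperfilter_le_atTop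
    have hε : Tendsto (fun n : ℕ => (1 : ℝ) / ((n + 1 : ℕ) : ℝ)) U (𝓝 0) := by
      simpa using (tendsto_one_div_add_atTop_nhds_zero_nat (𝕜 := ℝ)).mono_left hU
    obtain ⟨s, hsI, hps⟩ : ∃ s ∈ Icc 0 t, Tendsto (fun n => (p n : ℝ)) U (𝓝 s) :=
      isCompact_Icc.ultrafilter_le_nhds (U.map fun n => (p n : ℝ))
        (le_principal_iff.2 (Ultrafilter.mem_map.2 (Eventually.of_forall fun n =>
          ⟨(hp0 n).le, ((hpq n).trans (hqt n)).le⟩)))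
    have hqs : Tendsto (fun n => (q n : ℝ)) U (𝓝 s) := by
      have hd : Tendsto (fun n => (q n : ℝ) - p n) U (𝓝 0) :=
        squeeze_zero (fun n => sub_nonneg.2 (hpq n).le) hqp hε
      simpa using hps.add hd
    have hright : ∀ u : ℕ → ℝ, Tendsto u U (𝓝 s) → (∀ᶠ n in U, s ≤ u n) →
        Tendsto (fun n => f (u n)) U (𝓝 (f s)) := fun u hu hus =>
      (hrc s hsI.1).tendsto.comp (tendsto_nhdsWithin_iff.2 ⟨hu, hus⟩)
    have hlefts : 0 < s → ∀ u : ℕ → ℝ, Tendsto u U (𝓝 s) → (∀ᶠ n in U, u n < s) →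
        Tendsto (fun n => f (u n)) U (𝓝 (fm s)) := fun hs u hu hus =>
      (hleft s hs).comp (tendsto_nhdsWithin_iff.2 ⟨hu, hus⟩)
    have key : ∀ L, Tendsto (fun n => f (q n) - f (p n)) U (𝓝 L) → L ∈ F := fun L hL =>
      mem_of_tendsto_thickening hF hL hε hmem
    rcases U.eventually_or.1 (Eventually.of_forall fun n => lt_or_ge (p n : ℝ) s) with hp | hp
    · obtain ⟨n₀, hn₀⟩ := hp.exists
      have hs0 : 0 < s := (hp0 n₀).trans hn₀
      rcases U.eventually_or.1 (Eventually.of_forall fun n => lt_or_ge (q n : ℝ) s) with hq | hq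
      · have h0 := (hlefts hs0 _ hqs hq).sub (hlefts hs0 _ hps hp)
        exact absurd (key 0 (by simpa using h0)) hF0
      · obtain ⟨n₁, hn₁⟩ := hq.exists
        exact ⟨s, hs0, hn₁.trans_lt (hqt n₁),
          key _ ((hright _ hqs hq).sub (hlefts hs0 _ hps hp))⟩
    · have hq : ∀ᶠ n in U, s ≤ (q n : ℝ) := hp.mono fun n hn => hn.trans (hpq n).le
      have h0 := (hright _ hqs hq).sub (hright _ hps hp)
      exact absurd (key 0 (by simpa using h0)) hF0
end

section
/- Let $f:[0,\infty)\to\mathbb{R}$ be a càdlàg function with the convention $f(0-)=f(0)$, let $F\subseteq\mathbb{R}$ be a closed set with $0\notin F$, and let $t>0$. For $n\ge1$ put $F_n=\{x\in\mathbb{R} \mid \exists\, y\in F: |x-y|\le 1/n\}$. Suppose that for every $n\ge1$ there exist $p_n,q_n\in\mathbb{Q}$ with $0<p_n<q_n<t$, $q_n-p_n\le 1/n$, and $f(q_n)-f(p_n)\in F_n$. Then there exists $s\in(0,t)$ such that $f(s)-f(s-)\in F$. -/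
/-! Along an ultrafilter finer than `atTop`, both `pₙ` and `qₙ` converge to some `s ∈ [0,t]` by
compactness, and each sequence stays on one side of `s`. On the left side (`< s`) the values of `f`
converge to `f(s-)`, on the right side (`≥ s`) to `f(s)`. The limit of `f(qₙ) - f(pₙ)` lies in the
closed set `F`, hence is nonzero, so `pₙ` and `qₙ` lie on different sides; as `pₙ < qₙ`, this means
`pₙ < s ≤ qₙ`. The limit is then `f(s) - f(s-)`, and `0 < pₙ < s ≤ qₙ < t`. -/

open Filter Topology Set

/-- If `f` is càdlàg (convention `f(0-) = f(0)`), `F` is closed with `0 ∉ F`,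
`t > 0`, and for every `n ≥ 1` there are rationals `0 < pₙ < qₙ < t` with
`qₙ - pₙ ≤ 1/n` and `f(qₙ) - f(pₙ)` in the closed `1/n`-thickening of `F`,
then there exists `s ∈ (0,t)` with `f(s) - f(s-) ∈ F`. -/
theorem jump_exists_of_rational_increments
    (f fm : ℝ → ℝ)
    -- `f` is right-continuous on `[0, ∞)`
    (hrc : ∀ t : ℝ, 0 ≤ t → ContinuousWithinAt f (Set.Ici t) t)
    -- `fm t` is the left limit of `f` at each `t > 0`
    (hleft : ∀ t : ℝ, 0 < t → Tendsto f (𝓝[<] t) (𝓝 (fm t)))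
    -- convention `f(0-) = f(0)`
    (hfm0 : fm 0 = f 0)
    -- `F` is a closed set not containing `0`
    (F : Set ℝ) (hF : IsClosed F) (hF0 : (0 : ℝ) ∉ F)
    (t : ℝ) (ht : 0 < t)
    (p q : ℕ → ℚ)
    (h : ∀ n : ℕ, 1 ≤ n →
      0 < (p n : ℝ) ∧ (p n : ℝ) < (q n : ℝ) ∧ (q n : ℝ) < t ∧
        (q n : ℝ) - (p n : ℝ) ≤ 1 / n ∧
        f (q n) - f (p n) ∈ {x : ℝ | ∃ y ∈ F, |x - y| ≤ 1 / n}) :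
    ∃ s : ℝ, 0 < s ∧ s < t ∧ f s - fm s ∈ F := by
  let U : Filter ℕ := hyperfilter ℕ
  have hU : U ≤ atTop := Nat.hyperfilter_le_atTop
  have h1 : ∀ᶠ n in U, 1 ≤ n := hU (eventually_ge_atTop 1)
  have hinv : Tendsto (fun n : ℕ => 1 / (n : ℝ)) U (𝓝 0) :=
    tendsto_one_div_atTop_nhds_zero_nat.mono_left hU
  obtain ⟨s, hs, hps⟩ : ∃ s ∈ Icc (0 : ℝ) t, Tendsto (fun n => (p n : ℝ)) U (𝓝 s) := by
    refine isCompact_Icc.ultrafilter_le_nhds ((hyperfilter ℕ).map fun n => (p n : ℝ)) ?_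
    rw [Ultrafilter.coe_map, le_principal_iff, mem_map]
    filter_upwards [h1] with n hn
    obtain ⟨a, b, c, -⟩ := h n hn
    exact ⟨a.le, (b.trans c).le⟩
  have hqs : Tendsto (fun n => (q n : ℝ)) U (𝓝 s) := by
    have hub : Tendsto (fun n => (p n : ℝ) + 1 / (n : ℝ)) U (𝓝 s) := by
      simpa using hps.add hinv
    refine tendsto_of_tendsto_of_tendsto_of_le_of_le' hps hub ?_ ?_
    · filter_upwards [h1] with n hn using (h n hn).2.1.le
    · filter_upwards [h1] with n hn
      linarith [(h n hn).2.2.2.1]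
  have hmem : ∀ b : ℝ, Tendsto (fun n => f (q n) - f (p n)) U (𝓝 b) → b ∈ F := by
    intro b hb
    choose! y hyF hy using fun n hn => (h n hn).2.2.2.2
    have hdiff : Tendsto (fun n => f (q n) - f (p n) - y n) U (𝓝 0) :=
      squeeze_zero_norm' (by filter_upwards [h1] with n hn using hy n hn) hinv
    have hyb : Tendsto y U (𝓝 b) := by simpa using hb.sub hdiff
    exact hF.mem_of_tendsto hyb (by filter_upwards [h1] with n hn using hyF n hn)
  have hR : ∀ u : ℕ → ℝ, Tendsto u U (𝓝 s) → (∀ᶠ n in U, s ≤ u n) →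
      Tendsto (fun n => f (u n)) U (𝓝 (f s)) := fun u hu hsu =>
    (hrc s hs.1).tendsto.comp (tendsto_nhdsWithin_iff.2 ⟨hu, hsu⟩)
  have hL : 0 < s → ∀ u : ℕ → ℝ, Tendsto u U (𝓝 s) → (∀ᶠ n in U, u n < s) →
      Tendsto (fun n => f (u n)) U (𝓝 (fm s)) := fun h0 u hu hsu =>
    (hleft s h0).comp (tendsto_nhdsWithin_iff.2 ⟨hu, hsu⟩)
  -- Since `U` is an ultrafilter, each sequence is eventually on one side of `s`.
  have hside : ∀ u : ℕ → ℝ, (∀ᶠ n in U, u n < s) ∨ (∀ᶠ n in U, s ≤ u n) := fun u =>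
    Ultrafilter.eventually_or.1 (Eventually.of_forall fun n => lt_or_ge (u n) s)
  rcases hside (fun n => (p n : ℝ)) with hp | hp
  · obtain ⟨m, hm, hm1⟩ := (hp.and h1).exists
    have h0 : 0 < s := (h m hm1).1.trans hm
    rcases hside (fun n => (q n : ℝ)) with hq | hq
    · exact absurd (hmem 0 (by simpa using (hL h0 _ hqs hq).sub (hL h0 _ hps hp))) hF0
    · obtain ⟨k, hk, hk1⟩ := (hq.and h1).exists
      exact ⟨s, h0, hk.trans_lt (h k hk1).2.2.1, hmem _ ((hR _ hqs hq).sub (hL h0 _ hps hp))⟩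
  · have hq : ∀ᶠ n in U, s ≤ (q n : ℝ) := by
      filter_upwards [hp, h1] with n hn hn1 using hn.trans (h n hn1).2.1.le
    exact absurd (hmem 0 (by simpa using (hR _ hqs hq).sub (hR _ hps hp))) hF0
end
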